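/- Example of limit domination without domination: Let g : [0,1] → [0,1] be a C^r (r ≥ 1) increasing function with g(0) = 0, g'(0) = 1/2, g(1) = 1, g'(1) = 1/2, g(1/2) = 1/2, g'(1/2) = (3+√5)/2, g(x) < x for x ∈ (0,1/2) and g(x) > x for x ∈ (1/2,1), regarded as a circle map; let h : T^2 → T^2 be the hyperbolic torus automorphism (y,z) ↦ (2y+z, y+z), and let f = g × h : T^3 → T^3. Let TT^3 = E_1 ⊕ E_2 ⊕ E_3 be the natural continuous Df-invariant splitting, where E_2, E_3 are the stable and unstable bundles of h (with exponents log((3−√5)/2) and log((3+√5)/2)) and E_1 is the g-direction. Set E^s = E_1 ⊕ E_2 and E^u = E_3. Then E^s ⊕ E^u is a continuous Df-invariant splitting of TT^3 over all of T^3 which is (1, log((3+√5)^{1/2}))-limit-dominated over T^3 ∖ ({1/2} × T^2), but is not limit-dominated at any point of {1/2} × T^2; moreover the maximal f-invariant set admitting domination is {0} × T^2, and the product measure μ = δ_0 × m (δ_0 the Dirac measure at 0 ∈ S^1, m the Lebesgue measure on T^2) is a hyperbolic ergodic measure of f with the three nonzero Lyapunov exponents −log 2, −log((3+√5)/2) and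 log((3+√5)/2). -/

import Mathlib

open Filter Finset MeasureTheory

noncomputable section

/-- The (derivative) cocycle of `A` over `f`: `cocN f A n x = Dfⁿ_x = A(fⁿ⁻¹x) ∘ ⋯ ∘ A(x)`. -/
def cocN {M V : Type*} [NormedAddCommGroup V] [NormedSpace ℝ V]
    (f : M ≃ M) (A : M → (V ≃L[ℝ] V)) : ℕ → M → (V ≃L[ℝ] V)
  | 0, _ => ContinuousLinearEquiv.refl ℝ V
  | (n+1), x => (cocN f A n x).trans (A ((⇑f)^[n] x))

/-- Operator norm of `T` restricted to the subspace `W`. -/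
def opNormOn {V : Type*} [NormedAddCommGroup V] [NormedSpace ℝ V]
    (T : V →L[ℝ] V) (W : Submodule ℝ V) : ℝ :=
  sSup ((fun v => ‖T v‖) '' {v : V | v ∈ W ∧ ‖v‖ = 1})

/-- Minimal norm (co-norm) of `T` restricted to the subspace `W`. -/
def minNormOn {V : Type*} [NormedAddCommGroup V] [NormedSpace ℝ V]
    (T : V →L[ℝ] V) (W : Submodule ℝ V) : ℝ :=
  sInf ((fun v => ‖T v‖) '' {v : V | v ∈ W ∧ ‖v‖ = 1})

/-- The splitting `E ⊕ F` is `(S,λ)`-limit-dominated on `Δ`. -/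
def LimitDominated {M V : Type*} [NormedAddCommGroup V] [NormedSpace ℝ V]
    (f : M ≃ M) (A : M → (V ≃L[ℝ] V))
    (E F : M → Submodule ℝ V) (Δ : Set M) (S : ℕ) (lam : ℝ) : Prop :=
  ∀ x ∈ Δ, Filter.limsup (fun l : ℕ =>
    Real.log (opNormOn ((cocN f A S ((⇑f)^[l*S] x) : V →L[ℝ] V)) (E ((⇑f)^[l*S] x))
      / minNormOn ((cocN f A S ((⇑f)^[l*S] x) : V →L[ℝ] V)) (F ((⇑f)^[l*S] x))))
    Filter.atTop ≤ -(2*lam)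

/-- The canonical representative in `[0,1)` of a point of the circle `ℝ/ℤ`. -/
def liftc (x : UnitAddCircle) : ℝ :=
  letI : Fact ((0:ℝ) < 1) := ⟨zero_lt_one⟩
  ↑(AddCircle.equivIco 1 0 x)

/-- The circle map induced by `g : [0,1] → [0,1]` (with `g 0 = 0`, `g 1 = 1`). -/
def gbar (g : ℝ → ℝ) (x : UnitAddCircle) : UnitAddCircle :=
  ((g (liftc x) : ℝ) : UnitAddCircle)

/-- The three-torus `T³ = S¹ × T²`. -/
abbrev Torus3 : Type := UnitAddCircle × UnitAddCircle × UnitAddCircle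

/-- `ℝ³`, the common model of the tangent spaces of `T³`. -/
abbrev V3 : Type := ℝ × ℝ × ℝ

open scoped symmDiff Topology in
/-- A surjective continuous endomorphism of a compact group is ergodic as soon as the points whose
forward orbit converges to the identity are dense. -/
theorem AddMonoidHom.ergodic_of_dense_tendsto_zero {G : Type*} [AddCommGroup G]
    [TopologicalSpace G] [IsTopologicalAddGroup G] [SecondCountableTopology G] [CompactSpace G]
    [MeasurableSpace G] [BorelSpace G] {μ : Measure G} [μ.IsAddHaarMeasure] (f : G →+ G)
    (hcont : Continuous f) (hsurj : Function.Surjective f)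
    (hf : Dense {x : G | Tendsto (fun n : ℕ => f^[n] x) atTop (𝓝 0)}) : Ergodic f μ := by
  have hmp : MeasurePreserving f μ μ := f.measurePreserving hcont hsurj rfl
  refine ⟨hmp, ⟨fun s hsm hs => ?_⟩⟩
  refine aeconst_of_dense_setOfPred_preimage_vadd_ae (M := G) hsm.nullMeasurableSet (hf.mono ?_)
  intro x hx
  let τ : C(G, C(G, G)) := ContinuousMap.curry ⟨fun p : G × G => p.1 + p.2, continuous_add⟩
  have hτ (z : G) : MeasurePreserving (τ z) μ μ := measurePreserving_add_left μ z
  have hlim := tendsto_measure_symmDiff_preimage_nhds_zero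
    ((τ.continuous.tendsto 0).comp hx) (Eventually.of_forall fun n => hτ _) (hτ 0)
    hsm.nullMeasurableSet (measure_ne_top μ s)
  have hzero : τ 0 ⁻¹' s = s := by
    ext y
    simp [τ]
  have hconst (n : ℕ) : μ (((τ ∘ fun n : ℕ => f^[n] x) n ⁻¹' s) ∆ (τ 0 ⁻¹' s))
      = μ ((τ x ⁻¹' s) ∆ s) := by
    have hsn : f^[n] ⁻¹' s = s := by
      rw [Set.preimage_iterate_eq, Function.iterate_fixed hs]
    have hpre : f^[n] ⁻¹' ((τ (f^[n] x) ⁻¹' s) ∆ s) = (τ x ⁻¹' s) ∆ s := by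
      rw [Set.preimage_symmDiff, hsn]
      congr 1
      ext y
      have : f^[n] x + f^[n] y = f^[n] (x + y) := by simp
      conv_rhs => rw [← hsn]
      simp [τ]
    rw [hzero, ← hpre, (hmp.iterate n).measure_preimage]
    · rfl
    · exact (((hτ _).measurable hsm).symmDiff hsm).nullMeasurableSet
  simp only [hconst] at hlim
  have h0 : μ ((τ x ⁻¹' s) ∆ s) = 0 := tendsto_nhds_unique tendsto_const_nhds hlim
  exact measure_symmDiff_eq_zero_iff.1 h0

/-- The hyperbolic automorphism `(y, z) ↦ (2y + z, y + z)` of an abelian group squared. -/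
def catMap (G : Type*) [AddCommGroup G] : G × G →+ G × G where
  toFun q := (2 • q.1 + q.2, q.1 + q.2)
  map_zero' := by simp
  map_add' a b := by
    ext <;> simp <;> abel

theorem catMap_surjective (G : Type*) [AddCommGroup G] : Function.Surjective (catMap G) := by
  intro q
  refine ⟨(q.1 - q.2, 2 • q.2 - q.1), ?_⟩
  ext
  · simp [catMap, two_nsmul]
    abel
  · simp [catMap, two_nsmul]

theorem catMap_iterate_coe {c : ℝ} (hc : c ^ 2 = c + 1) (t : ℝ) (n : ℕ) :
    (catMap UnitAddCircle)^[n] (((c * t : ℝ) : UnitAddCircle), (t : UnitAddCircle)) =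
      ((((c + 1) ^ n * (c * t) : ℝ) : UnitAddCircle),
        (((c + 1) ^ n * t : ℝ) : UnitAddCircle)) := by
  induction n with
  | zero => simp
  | succ n ih =>
    rw [Function.iterate_succ_apply', ih]
    simp only [catMap, AddMonoidHom.coe_mk, ZeroHom.coe_mk, ← AddCircle.coe_nsmul,
      ← AddCircle.coe_add, Prod.mk.injEq]
    constructor
    · congr 1
      rw [nsmul_eq_mul]
      push_cast
      linear_combination (-(c + 1) ^ n * t) * hc
    · congr 1
      ring

open Real in
theorem goldenConj_add_one_pos : 0 < goldenConj + 1 := by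
  linarith [neg_one_lt_goldenConj]

open Real Topology in
theorem dense_tendsto_catMap_zero :
    Dense {x : UnitAddCircle × UnitAddCircle |
      Tendsto (fun n : ℕ => (catMap UnitAddCircle)^[n] x) atTop (𝓝 0)} := by
  let L : ℝ →+ UnitAddCircle × UnitAddCircle :=
    { toFun := fun t => (((goldenConj * t : ℝ) : UnitAddCircle), (t : UnitAddCircle))
      map_zero' := by simp
      map_add' := fun a b => by simp [mul_add] }
  have hsub : Set.range L ⊆ {x : UnitAddCircle × UnitAddCircle |
      Tendsto (fun n : ℕ => (catMap UnitAddCircle)^[n] x) atTop (𝓝 0)} := by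
    rintro _ ⟨t, rfl⟩
    have hpow : Tendsto (fun n : ℕ => (goldenConj + 1) ^ n) atTop (𝓝 0) :=
      tendsto_pow_atTop_nhds_zero_of_lt_one goldenConj_add_one_pos.le
        (by linarith [goldenConj_neg])
    have hc : Continuous fun r : ℝ =>
        (((r * (goldenConj * t) : ℝ) : UnitAddCircle), ((r * t : ℝ) : UnitAddCircle)) :=
      ((AddCircle.continuous_mk' 1).comp (by fun_prop)).prodMk
        ((AddCircle.continuous_mk' 1).comp (by fun_prop))
    have := (hc.tendsto 0).comp hpow
    simp only [zero_mul, AddCircle.coe_zero] at this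
    refine this.congr fun n => ?_
    exact (catMap_iterate_coe goldenConj_sq t n).symm
  refine Dense.mono hsub ?_
  have hcl : ∀ y : UnitAddCircle, (y, (0 : UnitAddCircle)) ∈ L.range.topologicalClosure := by
    have hd : DenseRange (fun k : ℤ => k • (goldenConj : UnitAddCircle)) :=
      AddCircle.denseRange_zsmul_coe_iff.2 (by simpa using goldenConj_irrational)
    have hclosed : IsClosed {y : UnitAddCircle |
        (y, (0 : UnitAddCircle)) ∈ L.range.topologicalClosure} :=
      L.range.isClosed_topologicalClosure.preimage (by fun_prop)
    intro y
    refine hd.induction_on (p := fun y => (y, (0 : UnitAddCircle)) ∈ L.range.topologicalClosure)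
      y hclosed fun k => L.range.le_topologicalClosure ⟨k, ?_⟩
    have hk : ((k : ℝ) : UnitAddCircle) = 0 := AddCircle.coe_eq_zero_iff 1 |>.2 ⟨k, by simp⟩
    simp only [L, AddMonoidHom.coe_mk, ZeroHom.coe_mk, hk, ← AddCircle.coe_zsmul, zsmul_eq_mul,
      mul_comm]
  intro x
  obtain ⟨y, z⟩ := x
  obtain ⟨t, rfl⟩ := QuotientAddGroup.mk_surjective z
  have h1 : L t ∈ L.range.topologicalClosure := L.range.le_topologicalClosure ⟨t, rfl⟩
  have h2 := add_mem h1 (hcl (y - ((goldenConj * t : ℝ) : UnitAddCircle)))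
  simpa [L] using! h2

theorem ergodic_catMap :
    Ergodic (catMap UnitAddCircle) (volume : Measure (UnitAddCircle × UnitAddCircle)) := by
  have : (volume : Measure (UnitAddCircle × UnitAddCircle)).IsAddHaarMeasure :=
    Measure.prod.instIsAddHaarMeasure _ _
  refine (catMap UnitAddCircle).ergodic_of_dense_tendsto_zero ?_ (catMap_surjective _)
    dense_tendsto_catMap_zero
  change Continuous fun q : UnitAddCircle × UnitAddCircle => (2 • q.1 + q.2, q.1 + q.2)
  fun_prop

theorem liftc_mem (x : UnitAddCircle) : liftc x ∈ Set.Ico (0 : ℝ) 1 := by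
  have : Fact ((0 : ℝ) < 1) := ⟨zero_lt_one⟩
  simpa [liftc] using (AddCircle.equivIco (1 : ℝ) 0 x).2

theorem coe_liftc (x : UnitAddCircle) : ((liftc x : ℝ) : UnitAddCircle) = x := by
  have : Fact ((0 : ℝ) < 1) := ⟨zero_lt_one⟩
  exact AddCircle.coe_equivIco

theorem liftc_coe {t : ℝ} (ht : t ∈ Set.Ico (0 : ℝ) 1) : liftc (t : UnitAddCircle) = t := by
  have : Fact ((0 : ℝ) < 1) := ⟨zero_lt_one⟩
  exact AddCircle.equivIco_coe_of_mem (a := (0 : ℝ)) (by simpa using ht)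

theorem liftc_zero : liftc 0 = 0 := by
  simpa using liftc_coe (t := 0) (by simp)

theorem measurable_liftc : Measurable liftc := by
  have : Fact ((0 : ℝ) < 1) := ⟨zero_lt_one⟩
  exact measurable_subtype_coe.comp (AddCircle.measurableEquivIco 1 0).measurable

theorem measurable_gbar {g : ℝ → ℝ} (hg : ContinuousOn g (Set.Icc 0 1)) :
    Measurable (gbar g) := by
  have heq : gbar g = fun x =>
      ((Set.IccExtend zero_le_one (Set.domRestrict (Set.Icc (0 : ℝ) 1) g) (liftc x) : ℝ) :
        UnitAddCircle) := by
    funext x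
    rw [Set.IccExtend_of_mem _ _ (Set.Ico_subset_Icc_self (liftc_mem x))]
    rfl
  rw [heq]
  have hcont : Continuous (Set.IccExtend (zero_le_one (α := ℝ))
      (Set.domRestrict (Set.Icc (0 : ℝ) 1) g)) := hg.domRestrict.Icc_extend'
  exact ((AddCircle.continuous_mk' 1).comp hcont).measurable.comp measurable_liftc

/-- An increasing self-map of `[0, 1]` whose only fixed points are `0`, `1/2` and `1`, attracting at
the end points and repelling in the middle. -/
structure IsRepellingAtHalf (g : ℝ → ℝ) : Prop where
  mono : StrictMonoOn g (Set.Icc 0 1)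
  cont : ContinuousOn g (Set.Icc 0 1)
  zero : g 0 = 0
  one : g 1 = 1
  half : g (1 / 2) = 1 / 2
  lt_self : ∀ x ∈ Set.Ioo (0 : ℝ) (1 / 2), g x < x
  self_lt : ∀ x ∈ Set.Ioo (1 / 2 : ℝ) 1, x < g x

namespace IsRepellingAtHalf

open Topology

variable {g : ℝ → ℝ}

theorem mapsTo_Icc (hg : IsRepellingAtHalf g) : Set.MapsTo g (Set.Icc 0 1) (Set.Icc 0 1) := by
  intro x hx
  have h0 := hg.mono.monotoneOn (Set.left_mem_Icc.2 zero_le_one) hx hx.1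
  have h1 := hg.mono.monotoneOn hx (Set.right_mem_Icc.2 zero_le_one) hx.2
  rw [hg.zero] at h0
  rw [hg.one] at h1
  exact ⟨h0, h1⟩

theorem mapsTo_Ico (hg : IsRepellingAtHalf g) : Set.MapsTo g (Set.Ico 0 1) (Set.Ico 0 1) := by
  intro x hx
  have h1 := hg.mono (Set.Ico_subset_Icc_self hx) (Set.right_mem_Icc.2 zero_le_one) hx.2
  rw [hg.one] at h1
  exact ⟨(hg.mapsTo_Icc (Set.Ico_subset_Icc_self hx)).1, h1⟩

theorem lt_half_iff (hg : IsRepellingAtHalf g) {x : ℝ} (hx : x ∈ Set.Icc (0 : ℝ) 1) :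
    g x < 1 / 2 ↔ x < 1 / 2 := by
  rw [← hg.mono.lt_iff_lt hx (by norm_num : (1 / 2 : ℝ) ∈ Set.Icc (0 : ℝ) 1), hg.half]

theorem half_lt_iff (hg : IsRepellingAtHalf g) {x : ℝ} (hx : x ∈ Set.Icc (0 : ℝ) 1) :
    1 / 2 < g x ↔ 1 / 2 < x := by
  rw [← hg.mono.lt_iff_lt (by norm_num : (1 / 2 : ℝ) ∈ Set.Icc (0 : ℝ) 1) hx, hg.half]

theorem eq_of_fixed (hg : IsRepellingAtHalf g) {x : ℝ} (hx : x ∈ Set.Icc (0 : ℝ) 1)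
    (hfix : g x = x) : x = 0 ∨ x = 1 / 2 ∨ x = 1 := by
  rcases hx.1.eq_or_lt with h0 | h0
  · exact Or.inl h0.symm
  rcases hx.2.eq_or_lt with h1 | h1
  · exact Or.inr (Or.inr h1)
  rcases lt_trichotomy x (1 / 2) with h | h | h
  · exact absurd hfix (hg.lt_self x ⟨h0, h⟩).ne
  · exact Or.inr (Or.inl h)
  · exact absurd hfix (hg.self_lt x ⟨h, h1⟩).ne'

theorem le_self (hg : IsRepellingAtHalf g) {x : ℝ} (hx : x ∈ Set.Icc (0 : ℝ) (1 / 2)) :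
    g x ≤ x := by
  rcases hx.1.eq_or_lt with h0 | h0
  · rw [← h0, hg.zero]
  rcases hx.2.eq_or_lt with h1 | h1
  · rw [h1, hg.half]
  · exact (hg.lt_self x ⟨h0, h1⟩).le

theorem self_le (hg : IsRepellingAtHalf g) {x : ℝ} (hx : x ∈ Set.Icc (1 / 2 : ℝ) 1) :
    x ≤ g x := by
  rcases hx.1.eq_or_lt with h0 | h0
  · rw [← h0, hg.half]
  rcases hx.2.eq_or_lt with h1 | h1
  · rw [h1, hg.one]
  · exact (hg.self_lt x ⟨h0, h1⟩).le

theorem tendsto_apply (hg : IsRepellingAtHalf g) {u : ℕ → ℝ} {L : ℝ}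
    (hu : ∀ n, u n ∈ Set.Icc (0 : ℝ) 1) (hL : L ∈ Set.Icc (0 : ℝ) 1)
    (h : Tendsto u atTop (𝓝 L)) : Tendsto (fun n => g (u n)) atTop (𝓝 (g L)) :=
  (hg.cont L hL).tendsto.comp
    (tendsto_nhdsWithin_iff.2 ⟨h, Eventually.of_forall hu⟩)

theorem iterate_mem (hg : IsRepellingAtHalf g) {x : ℝ} (hx : x ∈ Set.Icc (0 : ℝ) 1) (n : ℕ) :
    g^[n] x ∈ Set.Icc (0 : ℝ) 1 :=
  hg.mapsTo_Icc.iterate n hx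

/-- A forward orbit in `[0, 1/2)` converges to `0`. -/
theorem tendsto_iterate_zero (hg : IsRepellingAtHalf g) {x : ℝ} (hx : x ∈ Set.Ico (0 : ℝ) (1 / 2)) :
    Tendsto (fun n => g^[n] x) atTop (𝓝 0) := by
  have hx1 : x ∈ Set.Icc (0 : ℝ) 1 := ⟨hx.1, by linarith [hx.2]⟩
  have hmem (n : ℕ) : g^[n] x < 1 / 2 := by
    induction n with
    | zero => exact hx.2
    | succ n ih =>
      rw [Function.iterate_succ_apply', hg.lt_half_iff (hg.iterate_mem hx1 n)]
      exact ih
  have hanti : Antitone fun n => g^[n] x := antitone_nat_of_succ_le fun n => by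
    rw [Function.iterate_succ_apply']
    exact hg.le_self ⟨(hg.iterate_mem hx1 n).1, (hmem n).le⟩
  have hbdd : BddBelow (Set.range fun n => g^[n] x) :=
    ⟨0, by rintro _ ⟨n, rfl⟩; exact (hg.iterate_mem hx1 n).1⟩
  have hlim := tendsto_atTop_ciInf hanti hbdd
  set L := ⨅ n, g^[n] x
  have hL0 : 0 ≤ L := ge_of_tendsto' hlim fun n => (hg.iterate_mem hx1 n).1
  have hLx : L ≤ x := ciInf_le hbdd 0
  have hL : L ∈ Set.Icc (0 : ℝ) 1 := ⟨hL0, hLx.trans hx1.2⟩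
  have hfix : g L = L := by
    refine tendsto_nhds_unique (hg.tendsto_apply (hg.iterate_mem hx1) hL hlim) ?_
    simpa only [Function.comp_def, Function.iterate_succ_apply'] using
      hlim.comp (tendsto_add_atTop_nat 1)
  have : L = 0 := by
    rcases hg.eq_of_fixed hL hfix with h | h | h
    · exact h
    · linarith [hx.2]
    · linarith [hx.2]
  rwa [this] at hlim

/-- A forward orbit in `(1/2, 1]` converges to `1`. -/
theorem tendsto_iterate_one (hg : IsRepellingAtHalf g) {x : ℝ} (hx : x ∈ Set.Ioc (1 / 2 : ℝ) 1) :
    Tendsto (fun n => g^[n] x) atTop (𝓝 1) := by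
  have hx1 : x ∈ Set.Icc (0 : ℝ) 1 := ⟨by linarith [hx.1], hx.2⟩
  have hmem (n : ℕ) : 1 / 2 < g^[n] x := by
    induction n with
    | zero => exact hx.1
    | succ n ih =>
      rw [Function.iterate_succ_apply', hg.half_lt_iff (hg.iterate_mem hx1 n)]
      exact ih
  have hmono : Monotone fun n => g^[n] x := monotone_nat_of_le_succ fun n => by
    rw [Function.iterate_succ_apply']
    exact hg.self_le ⟨(hmem n).le, (hg.iterate_mem hx1 n).2⟩
  have hbdd : BddAbove (Set.range fun n => g^[n] x) :=
    ⟨1, by rintro _ ⟨n, rfl⟩; exact (hg.iterate_mem hx1 n).2⟩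
  have hlim := tendsto_atTop_ciSup hmono hbdd
  set L := ⨆ n, g^[n] x
  have hL1 : L ≤ 1 := le_of_tendsto' hlim fun n => (hg.iterate_mem hx1 n).2
  have hLx : x ≤ L := le_ciSup hbdd 0
  have hL : L ∈ Set.Icc (0 : ℝ) 1 := ⟨hx1.1.trans hLx, hL1⟩
  have hfix : g L = L := by
    refine tendsto_nhds_unique (hg.tendsto_apply (hg.iterate_mem hx1) hL hlim) ?_
    simpa only [Function.comp_def, Function.iterate_succ_apply'] using
      hlim.comp (tendsto_add_atTop_nat 1)
  have : L = 1 := by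
    rcases hg.eq_of_fixed hL hfix with h | h | h
    · linarith [hx.1]
    · linarith [hx.1]
    · exact h
  rwa [this] at hlim

/-- A backward orbit in `(0, 1)` converges to `1/2`. -/
theorem tendsto_backward_half (hg : IsRepellingAtHalf g) {u : ℕ → ℝ}
    (hu : ∀ n, u n ∈ Set.Icc (0 : ℝ) 1) (hback : ∀ n, g (u (n + 1)) = u n)
    (h0 : 0 < u 0) (h1 : u 0 < 1) : Tendsto u atTop (𝓝 (1 / 2)) := by
  have hfix {L : ℝ} (hlim : Tendsto u atTop (𝓝 L)) : g L = L := by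
    have hL : L ∈ Set.Icc (0 : ℝ) 1 := isClosed_Icc.mem_of_tendsto hlim (Eventually.of_forall hu)
    have h := (hg.tendsto_apply hu hL hlim).comp (tendsto_add_atTop_nat 1)
    simp only [Function.comp_def, hback] at h
    exact tendsto_nhds_unique h hlim
  rcases le_total (u 0) (1 / 2) with h | h
  · have hmem (n : ℕ) : u n ≤ 1 / 2 := by
      induction n with
      | zero => exact h
      | succ n ih =>
        rw [← hback n] at ih
        exact not_lt.1 fun hlt => not_lt.2 ih ((hg.half_lt_iff (hu _)).2 hlt)
    have hmono : Monotone u := monotone_nat_of_le_succ fun n => by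
      conv_lhs => rw [← hback n]
      exact hg.le_self ⟨(hu _).1, hmem _⟩
    have hbdd : BddAbove (Set.range u) := ⟨1, by rintro _ ⟨n, rfl⟩; exact (hu n).2⟩
    have hlim := tendsto_atTop_ciSup hmono hbdd
    have hge : u 0 ≤ ⨆ n, u n := le_ciSup hbdd 0
    have hle : ⨆ n, u n ≤ 1 / 2 := ciSup_le hmem
    rcases hg.eq_of_fixed ⟨by linarith, by linarith⟩ (hfix hlim) with h' | h' | h'
    · linarith
    · rwa [h'] at hlim
    · linarith
  · have hmem (n : ℕ) : 1 / 2 ≤ u n := by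
      induction n with
      | zero => exact h
      | succ n ih =>
        rw [← hback n] at ih
        exact not_lt.1 fun hlt => not_lt.2 ih ((hg.lt_half_iff (hu _)).2 hlt)
    have hanti : Antitone u := antitone_nat_of_succ_le fun n => by
      conv_rhs => rw [← hback n]
      exact hg.self_le ⟨hmem _, (hu _).2⟩
    have hbdd : BddBelow (Set.range u) := ⟨0, by rintro _ ⟨n, rfl⟩; exact (hu n).1⟩
    have hlim := tendsto_atTop_ciInf hanti hbdd
    have hle : ⨅ n, u n ≤ u 0 := ciInf_le hbdd 0
    have hge : 1 / 2 ≤ ⨅ n, u n := le_ciInf hmem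
    rcases hg.eq_of_fixed ⟨by linarith, by linarith⟩ (hfix hlim) with h' | h' | h'
    · linarith
    · rwa [h'] at hlim
    · linarith

theorem liftc_gbar (hg : IsRepellingAtHalf g) (x : UnitAddCircle) :
    liftc (gbar g x) = g (liftc x) :=
  liftc_coe (hg.mapsTo_Ico (liftc_mem x))

theorem tendsto_iterate_of_tendsto (hg : IsRepellingAtHalf g) {u : ℕ → ℝ} {L : ℝ}
    (hu : ∀ n, u n ∈ Set.Icc (0 : ℝ) 1) (hL : L ∈ Set.Icc (0 : ℝ) 1)
    (h : Tendsto u atTop (𝓝 L)) (i : ℕ) :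
    Tendsto (fun n => g^[i] (u n)) atTop (𝓝 (g^[i] L)) := by
  induction i with
  | zero => exact h
  | succ i ih =>
    simp only [Function.iterate_succ_apply']
    exact hg.tendsto_apply (fun n => hg.iterate_mem (hu n) i) (hg.iterate_mem hL i) ih

end IsRepellingAtHalf

section Golden

open Real

theorem goldenConj_add_one_lt_half : goldenConj + 1 < 1 / 2 := by
  have h : (2 : ℝ) < √5 := by
    rw [Real.lt_sqrt] <;> norm_num
  rw [goldenConj]
  linarith

theorem goldenRatio_add_one : goldenRatio + 1 = (3 + √5) / 2 := by
  rw [goldenRatio]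
  ring

theorem log_goldenConj_add_one : Real.log (goldenConj + 1) = -Real.log (goldenRatio + 1) := by
  rw [← Real.log_inv]
  congr 1
  refine eq_inv_of_mul_eq_one_left ?_
  linear_combination goldenRatio_add_goldenConj + goldenRatio_mul_goldenConj

theorem norm_stable (s t : ℝ) : ‖((s, goldenConj * t, t) : V3)‖ = max |s| |t| := by
  have h : |goldenConj| ≤ 1 := abs_le.2 ⟨neg_one_lt_goldenConj.le, by linarith [goldenConj_neg]⟩
  rw [Prod.norm_mk, Prod.norm_mk, norm_eq_abs, norm_eq_abs, norm_eq_abs, abs_mul,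
    max_eq_right (a := |goldenConj| * |t|) (mul_le_of_le_one_left (abs_nonneg t) h)]

theorem norm_unstable (t : ℝ) : ‖((0, goldenRatio * t, t) : V3)‖ = goldenRatio * |t| := by
  rw [Prod.norm_mk, Prod.norm_mk, norm_zero, norm_eq_abs, norm_eq_abs, abs_mul,
    abs_of_pos goldenRatio_pos,
    max_eq_left (le_mul_of_one_le_left (abs_nonneg t) one_lt_goldenRatio.le),
    max_eq_right (mul_nonneg goldenRatio_pos.le (abs_nonneg t))]

/-- The stable bundle `E₁ ⊕ E₂`. -/
def stableSpace : Submodule ℝ V3 := Submodule.span ℝ {(1, 0, 0), (0, goldenConj, 1)}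

/-- The unstable bundle `E₃`. -/
def unstableSpace : Submodule ℝ V3 := Submodule.span ℝ {(0, goldenRatio, 1)}

theorem mem_stableSpace {v : V3} :
    v ∈ stableSpace ↔ ∃ s t : ℝ, v = (s, goldenConj * t, t) := by
  simp only [stableSpace, Submodule.mem_span_pair]
  refine exists₂_congr fun s t => ?_
  rw [eq_comm]
  simp [mul_comm]

theorem mem_unstableSpace {v : V3} :
    v ∈ unstableSpace ↔ ∃ t : ℝ, v = (0, goldenRatio * t, t) := by
  simp only [unstableSpace, Submodule.mem_span_singleton]
  refine exists_congr fun t => ?_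
  rw [eq_comm]
  simp [mul_comm]

theorem isCompl_stableSpace_unstableSpace : IsCompl stableSpace unstableSpace := by
  have hne : goldenRatio - goldenConj ≠ 0 := by
    linarith [goldenRatio_pos, goldenConj_neg]
  constructor
  · rw [Submodule.disjoint_def]
    intro v hs hu
    obtain ⟨s, t, rfl⟩ := mem_stableSpace.1 hs
    obtain ⟨t', ht'⟩ := mem_unstableSpace.1 hu
    simp only [Prod.mk.injEq] at ht'
    obtain ⟨rfl, h, rfl⟩ := ht'
    have : t = 0 := by
      refine (mul_eq_zero.1 ?_).resolve_left hne
      linear_combination -h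
    simp [this]
  · rw [Submodule.codisjoint_iff_exists_add_eq]
    rintro ⟨x, y, z⟩
    refine ⟨_, _, mem_stableSpace.2 ⟨x, (goldenRatio * z - y) / (goldenRatio - goldenConj), rfl⟩,
      mem_unstableSpace.2 ⟨(y - goldenConj * z) / (goldenRatio - goldenConj), rfl⟩, ?_⟩
    simp only [Prod.mk_add_mk, Prod.mk.injEq]
    refine ⟨by ring, ?_, ?_⟩ <;> field_simp <;> ring

theorem opNormOn_stableSpace {T : V3 →L[ℝ] V3} {a m : ℝ} (ha : 0 ≤ a) (hm : 0 ≤ m)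
    (hT : ∀ s t : ℝ, T (s, goldenConj * t, t) = (a * s, m * (goldenConj * t), m * t)) :
    opNormOn T stableSpace = max a m := by
  have hnorm (s t : ℝ) : ‖T (s, goldenConj * t, t)‖ = max (a * |s|) (m * |t|) := by
    rw [hT, mul_left_comm, norm_stable, abs_mul, abs_mul, abs_of_nonneg ha, abs_of_nonneg hm]
  refine IsGreatest.csSup_eq ⟨⟨(1, goldenConj * 1, 1), ⟨mem_stableSpace.2 ⟨1, 1, rfl⟩, ?_⟩, ?_⟩, ?_⟩
  · rw [norm_stable, abs_one, max_self]
  · exact (hnorm 1 1).trans (by rw [abs_one, mul_one, mul_one])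
  · rintro _ ⟨v, ⟨hv, hv1⟩, rfl⟩
    obtain ⟨s, t, rfl⟩ := mem_stableSpace.1 hv
    rw [norm_stable] at hv1
    simp only [hnorm]
    exact max_le_max (mul_le_of_le_one_right ha ((le_max_left _ _).trans hv1.le))
      (mul_le_of_le_one_right hm ((le_max_right _ _).trans hv1.le))

theorem minNormOn_unstableSpace {T : V3 →L[ℝ] V3} {k : ℝ} (hk : 0 ≤ k)
    (hT : ∀ t : ℝ, T (0, goldenRatio * t, t) = (0, k * (goldenRatio * t), k * t)) :
    minNormOn T unstableSpace = k := by
  have hnorm (t : ℝ) : ‖T (0, goldenRatio * t, t)‖ = k * (goldenRatio * |t|) := by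
    rw [hT, mul_left_comm, norm_unstable, abs_mul, abs_of_nonneg hk, mul_left_comm]
  have hinv : goldenRatio * |goldenRatio⁻¹| = 1 := by
    rw [abs_of_pos (inv_pos.2 goldenRatio_pos), mul_inv_cancel₀ goldenRatio_ne_zero]
  refine IsLeast.csInf_eq ⟨⟨(0, goldenRatio * goldenRatio⁻¹, goldenRatio⁻¹),
    ⟨mem_unstableSpace.2 ⟨goldenRatio⁻¹, rfl⟩, ?_⟩, ?_⟩, ?_⟩
  · rw [norm_unstable, hinv]
  · simp only [hnorm, hinv, mul_one]
  · rintro _ ⟨v, ⟨hv, hv1⟩, rfl⟩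
    obtain ⟨t, rfl⟩ := mem_unstableSpace.1 hv
    rw [norm_unstable] at hv1
    simp only [hnorm, hv1, mul_one, le_refl]

end Golden

section Cocycle

open Real Topology

variable {g : ℝ → ℝ} {F : Torus3 ≃ Torus3} {A : Torus3 → (V3 ≃L[ℝ] V3)}

/-- The derivative of `g^[n]` at `x`, expanded by the chain rule. -/
def orbitDeriv (g : ℝ → ℝ) (n : ℕ) (x : ℝ) : ℝ := ∏ i ∈ range n, deriv g (g^[i] x)

theorem orbitDeriv_pos (hg : IsRepellingAtHalf g) (hpos : ∀ x ∈ Set.Icc (0 : ℝ) 1, 0 < deriv g x)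
    {x : ℝ} (hx : x ∈ Set.Icc (0 : ℝ) 1) (n : ℕ) : 0 < orbitDeriv g n x :=
  prod_pos fun i _ => hpos _ (hg.iterate_mem hx i)

theorem orbitDeriv_of_fixed {x : ℝ} (hx : g x = x) (n : ℕ) :
    orbitDeriv g n x = deriv g x ^ n := by
  simp [orbitDeriv, Function.iterate_fixed hx]

theorem tendsto_orbitDeriv (hg : IsRepellingAtHalf g)
    (hcont : ContinuousOn (deriv g) (Set.Icc 0 1)) {u : ℕ → ℝ} {L : ℝ}
    (hu : ∀ n, u n ∈ Set.Icc (0 : ℝ) 1) (hL : L ∈ Set.Icc (0 : ℝ) 1)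
    (h : Tendsto u atTop (𝓝 L)) (n : ℕ) :
    Tendsto (fun l => orbitDeriv g n (u l)) atTop (𝓝 (orbitDeriv g n L)) :=
  tendsto_finsetProd _ fun i _ => (hcont _ (hg.iterate_mem hL i)).tendsto.comp
    (tendsto_nhdsWithin_iff.2 ⟨hg.tendsto_iterate_of_tendsto hu hL h i,
      Eventually.of_forall fun l => hg.iterate_mem (hu l) i⟩)

theorem liftc_iterate (hg : IsRepellingAtHalf g) (hF : ∀ p : Torus3, (F p).1 = gbar g p.1)
    (p : Torus3) (n : ℕ) : liftc (F^[n] p).1 = g^[n] (liftc p.1) := by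
  induction n with
  | zero => rfl
  | succ n ih => rw [Function.iterate_succ_apply', Function.iterate_succ_apply', hF,
      hg.liftc_gbar, ih]

theorem cocN_apply (hg : IsRepellingAtHalf g) (hF : ∀ p : Torus3, (F p).1 = gbar g p.1)
    (hA : ∀ p : Torus3, ∀ v : V3,
      A p v = (deriv g (liftc p.1) * v.1, 2 * v.2.1 + v.2.2, v.2.1 + v.2.2))
    {c : ℝ} (hc : c ^ 2 = c + 1) (n : ℕ) (p : Torus3) (s t : ℝ) :
    cocN F A n p (s, c * t, t) =
      (orbitDeriv g n (liftc p.1) * s, (c + 1) ^ n * (c * t), (c + 1) ^ n * t) := by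
  induction n with
  | zero => simp [cocN, orbitDeriv]
  | succ n ih =>
    rw [cocN, ContinuousLinearEquiv.trans_apply, ih, hA, liftc_iterate hg hF]
    simp only [Prod.mk.injEq]
    refine ⟨?_, ?_, by ring⟩
    · rw [orbitDeriv, orbitDeriv, prod_range_succ]
      ring
    · linear_combination (-(c + 1) ^ n * t) * hc

theorem opNormOn_div_minNormOn (hg : IsRepellingAtHalf g)
    (hpos : ∀ x ∈ Set.Icc (0 : ℝ) 1, 0 < deriv g x)
    (hF : ∀ p : Torus3, (F p).1 = gbar g p.1)
    (hA : ∀ p : Torus3, ∀ v : V3,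
      A p v = (deriv g (liftc p.1) * v.1, 2 * v.2.1 + v.2.2, v.2.1 + v.2.2))
    (n : ℕ) (p : Torus3) :
    opNormOn (cocN F A n p : V3 →L[ℝ] V3) stableSpace /
        minNormOn (cocN F A n p : V3 →L[ℝ] V3) unstableSpace =
      max (orbitDeriv g n (liftc p.1)) ((goldenConj + 1) ^ n) / (goldenRatio + 1) ^ n := by
  rw [opNormOn_stableSpace
      (orbitDeriv_pos hg hpos (Set.Ico_subset_Icc_self (liftc_mem p.1)) n).le
      (pow_nonneg goldenConj_add_one_pos.le n)
      (fun s t => cocN_apply hg hF hA goldenConj_sq n p s t),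
    minNormOn_unstableSpace (pow_nonneg (add_nonneg goldenRatio_pos.le zero_le_one) n)
      (fun t => by simpa using cocN_apply hg hF hA goldenRatio_sq n p 0 t)]

theorem apply_eigenvector {p : Torus3}
    (hA : ∀ v : V3, A p v = (deriv g (liftc p.1) * v.1, 2 * v.2.1 + v.2.2, v.2.1 + v.2.2))
    {c : ℝ} (hc : c ^ 2 = c + 1) (s t : ℝ) :
    A p (s, c * t, t) = (deriv g (liftc p.1) * s, c * ((c + 1) * t), (c + 1) * t) := by
  rw [hA]
  simp only [Prod.mk.injEq]
  exact ⟨trivial, by linear_combination (-t) * hc, by ring⟩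

theorem stableSpace_map {p : Torus3} (hpos : 0 < deriv g (liftc p.1))
    (hA : ∀ v : V3, A p v = (deriv g (liftc p.1) * v.1, 2 * v.2.1 + v.2.2, v.2.1 + v.2.2)) :
    Submodule.map ((A p : V3 →L[ℝ] V3) : V3 →ₗ[ℝ] V3) stableSpace = stableSpace := by
  apply le_antisymm
  · rintro _ ⟨v, hv, rfl⟩
    obtain ⟨s, t, rfl⟩ := mem_stableSpace.1 hv
    exact mem_stableSpace.2 ⟨_, _, apply_eigenvector hA goldenConj_sq s t⟩
  · intro v hv
    obtain ⟨s, t, rfl⟩ := mem_stableSpace.1 hv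
    refine ⟨_, mem_stableSpace.2
      ⟨(deriv g (liftc p.1))⁻¹ * s, (goldenConj + 1)⁻¹ * t, rfl⟩,
      (apply_eigenvector hA goldenConj_sq _ _).trans ?_⟩
    rw [mul_inv_cancel_left₀ goldenConj_add_one_pos.ne', mul_inv_cancel_left₀ hpos.ne']

theorem unstableSpace_map {p : Torus3}
    (hA : ∀ v : V3, A p v = (deriv g (liftc p.1) * v.1, 2 * v.2.1 + v.2.2, v.2.1 + v.2.2)) :
    Submodule.map ((A p : V3 →L[ℝ] V3) : V3 →ₗ[ℝ] V3) unstableSpace = unstableSpace := by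
  have hne : goldenRatio + 1 ≠ 0 := (add_pos goldenRatio_pos one_pos).ne'
  apply le_antisymm
  · rintro _ ⟨v, hv, rfl⟩
    obtain ⟨t, rfl⟩ := mem_unstableSpace.1 hv
    refine mem_unstableSpace.2
      ⟨(goldenRatio + 1) * t, (apply_eigenvector hA goldenRatio_sq 0 t).trans ?_⟩
    rw [mul_zero]
  · intro v hv
    obtain ⟨t, rfl⟩ := mem_unstableSpace.1 hv
    refine ⟨_, mem_unstableSpace.2 ⟨(goldenRatio + 1)⁻¹ * t, rfl⟩,
      (apply_eigenvector hA goldenRatio_sq _ _).trans ?_⟩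
    rw [mul_inv_cancel_left₀ hne, mul_zero]

/-- A set fixed by `F` on which the splitting is dominated lies over the fixed point `0`. -/
theorem subset_zero_fiber_of_dominated (hg : IsRepellingAtHalf g)
    (hcont : ContinuousOn (deriv g) (Set.Icc 0 1))
    (hpos : ∀ x ∈ Set.Icc (0 : ℝ) 1, 0 < deriv g x)
    (hhalf : deriv g (1 / 2) = goldenRatio + 1)
    (hF : ∀ p : Torus3, (F p).1 = gbar g p.1)
    (hA : ∀ p : Torus3, ∀ v : V3,
      A p v = (deriv g (liftc p.1) * v.1, 2 * v.2.1 + v.2.2, v.2.1 + v.2.2))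
    {Δ : Set Torus3} (hΔ : F '' Δ = Δ) {S : ℕ} {lam : ℝ} (hlam : 0 < lam)
    (hdom : ∀ p ∈ Δ, Real.log (opNormOn (cocN F A S p : V3 →L[ℝ] V3) stableSpace
      / minNormOn (cocN F A S p : V3 →L[ℝ] V3) unstableSpace) ≤ -(2 * lam)) :
    Δ ⊆ {p : Torus3 | p.1 = 0} := by
  intro p hp
  by_contra hne
  have hback : ∀ n : ℕ, F.symm^[n] p ∈ Δ := by
    intro n
    induction n with
    | zero => exact hp
    | succ n ih =>
      rw [Function.iterate_succ_apply']
      rw [← hΔ] at ih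
      obtain ⟨q, hq, hqe⟩ := ih
      rwa [← hqe, F.symm_apply_apply]
  let u : ℕ → ℝ := fun n => liftc (F.symm^[n] p).1
  have hu (n : ℕ) : u n ∈ Set.Icc (0 : ℝ) 1 := Set.Ico_subset_Icc_self (liftc_mem _)
  have hstep (n : ℕ) : g (u (n + 1)) = u n := by
    simp only [u]
    rw [← hg.liftc_gbar, ← hF, Function.iterate_succ_apply', F.apply_symm_apply]
  have h0 : 0 < u 0 := by
    refine (hu 0).1.lt_of_ne fun h => hne ?_
    have := coe_liftc p.1
    rw [show liftc p.1 = 0 from h.symm] at this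
    exact this.symm
  have hlim := hg.tendsto_backward_half hu hstep h0 (liftc_mem _).2
  have hφ : 0 < (goldenRatio + 1) ^ S := pow_pos (add_pos goldenRatio_pos one_pos) S
  have hder := tendsto_orbitDeriv hg hcont hu ⟨by norm_num, by norm_num⟩ hlim S
  rw [orbitDeriv_of_fixed hg.half, hhalf] at hder
  have hlog : Tendsto (fun n => Real.log (orbitDeriv g S (u n) / (goldenRatio + 1) ^ S)) atTop
      (𝓝 0) := by
    have := (hder.div_const ((goldenRatio + 1) ^ S)).log (by simp [hφ.ne'])
    simpa [div_self hφ.ne'] using this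
  have hle : (0 : ℝ) ≤ -(2 * lam) := by
    refine le_of_tendsto' hlog fun n => le_trans ?_ (hdom _ (hback n))
    rw [opNormOn_div_minNormOn hg hpos hF hA]
    refine Real.log_le_log (div_pos (orbitDeriv_pos hg hpos (hu n) S) hφ) ?_
    gcongr
    exact le_max_left _ _
  linarith

theorem max_half_div_golden :
    max (1 / 2) (goldenConj + 1) / (goldenRatio + 1) = (3 + √5)⁻¹ := by
  rw [max_eq_left goldenConj_add_one_lt_half.le, goldenRatio_add_one]
  field_simp

theorem two_mul_log_sqrt : 2 * Real.log √(3 + √5) = Real.log (3 + √5) := by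
  rw [Real.log_sqrt (by positivity)]
  ring

theorem limitDominated_compl_half (hg : IsRepellingAtHalf g)
    (hcont : ContinuousOn (deriv g) (Set.Icc 0 1))
    (hpos : ∀ x ∈ Set.Icc (0 : ℝ) 1, 0 < deriv g x)
    (h0 : deriv g 0 = 1 / 2) (h1 : deriv g 1 = 1 / 2)
    (hF : ∀ p : Torus3, (F p).1 = gbar g p.1)
    (hA : ∀ p : Torus3, ∀ v : V3,
      A p v = (deriv g (liftc p.1) * v.1, 2 * v.2.1 + v.2.2, v.2.1 + v.2.2)) :
    LimitDominated F A (fun _ => stableSpace) (fun _ => unstableSpace)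
      {p : Torus3 | p.1 ≠ (((1 : ℝ) / 2 : ℝ) : UnitAddCircle)} 1
      (Real.log √(3 + √5)) := by
  intro p hp
  have hmem := liftc_mem p.1
  have hiter := hg.iterate_mem (Set.Ico_subset_Icc_self hmem)
  have hder : Tendsto (fun l : ℕ => deriv g (g^[l] (liftc p.1))) atTop (𝓝 (1 / 2)) := by
    have key {L : ℝ} (hL : L ∈ Set.Icc (0 : ℝ) 1) (hdL : deriv g L = 1 / 2)
        (hlim : Tendsto (fun l : ℕ => g^[l] (liftc p.1)) atTop (𝓝 L)) :
        Tendsto (fun l : ℕ => deriv g (g^[l] (liftc p.1))) atTop (𝓝 (1 / 2)) := by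
      rw [← hdL]
      exact (hcont L hL).tendsto.comp
        (tendsto_nhdsWithin_iff.2 ⟨hlim, Eventually.of_forall hiter⟩)
    rcases lt_trichotomy (liftc p.1) (1 / 2) with h | h | h
    · exact key (by simp) h0 (hg.tendsto_iterate_zero ⟨hmem.1, h⟩)
    · exact absurd (by rw [← h, coe_liftc]) hp
    · exact key (by simp) h1 (hg.tendsto_iterate_one ⟨h, hmem.2.le⟩)
  refine le_of_eq (Tendsto.limsup_eq ?_)
  simp only [opNormOn_div_minNormOn hg hpos hF hA, mul_one, liftc_iterate hg hF, pow_one,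
    orbitDeriv, prod_range_one, Function.iterate_zero, id_eq]
  rw [two_mul_log_sqrt, ← Real.log_inv, ← max_half_div_golden]
  refine ((hder.max tendsto_const_nhds).div_const _).log ?_
  rw [max_half_div_golden]
  positivity

theorem not_limitDominated_half (hg : IsRepellingAtHalf g)
    (hpos : ∀ x ∈ Set.Icc (0 : ℝ) 1, 0 < deriv g x)
    (hhalf : deriv g (1 / 2) = goldenRatio + 1)
    (hF : ∀ p : Torus3, (F p).1 = gbar g p.1)
    (hA : ∀ p : Torus3, ∀ v : V3,
      A p v = (deriv g (liftc p.1) * v.1, 2 * v.2.1 + v.2.2, v.2.1 + v.2.2))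
    {p : Torus3} (hp : p.1 = (((1 : ℝ) / 2 : ℝ) : UnitAddCircle)) {lam : ℝ} (hlam : 0 < lam) :
    ¬ LimitDominated F A (fun _ => stableSpace) (fun _ => unstableSpace) {p} 1 lam := by
  intro h
  have hp' : liftc p.1 = 1 / 2 := by
    rw [hp, liftc_coe ⟨by norm_num, by norm_num⟩]
  have hle : goldenConj + 1 ≤ goldenRatio + 1 := by
    linarith [goldenConj_neg, goldenRatio_pos]
  have hne : goldenRatio + 1 ≠ 0 := (add_pos goldenRatio_pos one_pos).ne'
  have := h p rfl
  simp only [opNormOn_div_minNormOn hg hpos hF hA, mul_one, liftc_iterate hg hF, pow_one, hp',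
    orbitDeriv, prod_range_one, Function.iterate_fixed hg.half, hhalf,
    max_eq_left hle, div_self hne, Real.log_one, limsup_const] at this
  linarith

theorem log_zero_fiber (hg : IsRepellingAtHalf g)
    (hpos : ∀ x ∈ Set.Icc (0 : ℝ) 1, 0 < deriv g x) (h0 : deriv g 0 = 1 / 2)
    (hF : ∀ p : Torus3, (F p).1 = gbar g p.1)
    (hA : ∀ p : Torus3, ∀ v : V3,
      A p v = (deriv g (liftc p.1) * v.1, 2 * v.2.1 + v.2.2, v.2.1 + v.2.2))
    {p : Torus3} (hp : p.1 = 0) :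
    Real.log (opNormOn (cocN F A 1 p : V3 →L[ℝ] V3) stableSpace
      / minNormOn (cocN F A 1 p : V3 →L[ℝ] V3) unstableSpace) =
      -(2 * Real.log √(3 + √5)) := by
  rw [opNormOn_div_minNormOn hg hpos hF hA, hp, liftc_zero, orbitDeriv_of_fixed hg.zero, h0,
    pow_one, pow_one, pow_one, max_half_div_golden, two_mul_log_sqrt, Real.log_inv]

theorem image_zero_fiber (hg : IsRepellingAtHalf g) (hF : ∀ p : Torus3, (F p).1 = gbar g p.1) :
    F '' {p : Torus3 | p.1 = 0} = {p : Torus3 | p.1 = 0} := by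
  have key (p : Torus3) : (F p).1 = 0 ↔ p.1 = 0 := by
    rw [hF]
    constructor
    · intro h
      have h' := hg.liftc_gbar p.1
      rw [h, liftc_zero] at h'
      have hx := liftc_mem p.1
      have : liftc p.1 = 0 := hg.mono.injOn (Set.Ico_subset_Icc_self hx) (by simp)
        (h'.symm.trans hg.zero.symm)
      rw [← coe_liftc p.1, this, AddCircle.coe_zero]
    · intro h
      rw [h, gbar, liftc_zero, hg.zero, AddCircle.coe_zero]
  ext q
  rw [F.image_eq_preimage_symm]
  simp only [Set.mem_preimage, Set.mem_ofPred_eq]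
  rw [← key, F.apply_symm_apply]

theorem isProbabilityMeasure_dirac_prod_volume :
    IsProbabilityMeasure ((Measure.dirac (0 : UnitAddCircle)).prod
      (volume : Measure (UnitAddCircle × UnitAddCircle))) := by
  have h1 : IsProbabilityMeasure (volume : Measure UnitAddCircle) := ⟨UnitAddCircle.measure_univ⟩
  have h2 : IsProbabilityMeasure (volume : Measure (UnitAddCircle × UnitAddCircle)) :=
    Measure.prod.instIsProbabilityMeasure _ _
  infer_instance

theorem ergodic_dirac_prod_volume (hg : IsRepellingAtHalf g)
    (hF : ∀ p : Torus3, F p = (gbar g p.1, 2 • p.2.1 + p.2.2, p.2.1 + p.2.2)) :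
    Ergodic F ((Measure.dirac (0 : UnitAddCircle)).prod
      (volume : Measure (UnitAddCircle × UnitAddCircle))) := by
  have hmeas : Measurable F := by
    rw [funext hF]
    have h1 : Measurable fun p : Torus3 => gbar g p.1 :=
      (measurable_gbar hg.cont).comp measurable_fst
    have h2 : Continuous fun p : Torus3 => (2 • p.2.1 + p.2.2, p.2.1 + p.2.2) := by fun_prop
    exact h1.prodMk h2.measurable
  refine MeasurePreserving.ergodic_of_ergodic_semiconj (g := Prod.mk (0 : UnitAddCircle))
    ⟨measurable_prodMk_left, (Measure.dirac_prod _).symm⟩ ergodic_catMap hmeas fun q => ?_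
  rw [hF]
  simp [catMap, gbar, liftc_zero, hg.zero]

theorem tendsto_log_pow_mul_div {r C : ℝ} (hr : 0 < r) (hC : 0 < C) :
    Tendsto (fun l : ℕ => Real.log (r ^ l * C) / l) atTop (𝓝 (Real.log r)) := by
  have h : Tendsto (fun l : ℕ => Real.log r + Real.log C / l) atTop (𝓝 (Real.log r + 0)) :=
    tendsto_const_nhds.add (tendsto_const_div_atTop_nhds_zero_nat _)
  rw [add_zero] at h
  refine h.congr' ?_
  filter_upwards [eventually_gt_atTop 0] with l hl
  have hl' : (l : ℝ) ≠ 0 := by positivity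
  rw [Real.log_mul (pow_pos hr l).ne' hC.ne', Real.log_pow]
  field_simp

end Cocycle

/-- **Example 2.4**: the (limit-dominated but not dominated) example `f = g × h` on `T³`.
Here `g` is a circle diffeomorphism as in Example 2.4, `h(y,z) = (2y+z, y+z)` is the
hyperbolic torus automorphism, `F = g × h`, `A` is the derivative cocycle of `F`,
`E^s = E₁ ⊕ E₂` and `E^u = E₃`.  Then `E^s ⊕ E^u` is a continuous `DF`-invariant splitting
which is `(1, log(3+√5)^{1/2})`-limit-dominated over `T³ ∖ {1/2}×T²` but has no limit
domination at the points of `{1/2}×T²`; the maximal `F`-invariant set admitting domination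
is `{0}×T²`; and `μ = δ₀ × Leb` is a hyperbolic ergodic measure of `F` with the three
nonzero Lyapunov exponents `-log 2`, `-log((3+√5)/2)` and `log((3+√5)/2)`. -/
theorem example_limit_domination_not_domination
    (g : ℝ → ℝ)
    (hg_mono : StrictMonoOn g (Set.Icc 0 1))
    (hg_diff : ContDiffOn ℝ 1 g (Set.Icc 0 1))
    (hg0 : g 0 = 0) (hg1 : g 1 = 1) (hghalf : g (1/2) = 1/2)
    (hg'0 : deriv g 0 = 1/2) (hg'1 : deriv g 1 = 1/2)
    (hg'half : deriv g (1/2) = (3 + Real.sqrt 5)/2)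
    (hg'pos : ∀ x ∈ Set.Icc (0:ℝ) 1, 0 < deriv g x)
    (hlt : ∀ x ∈ Set.Ioo (0:ℝ) (1/2), g x < x)
    (hgt : ∀ x ∈ Set.Ioo ((1:ℝ)/2) 1, x < g x)
    -- `F = g × h : T³ → T³`
    (F : Torus3 ≃ Torus3)
    (hF : ∀ p : Torus3, F p = (gbar g p.1, 2 • p.2.1 + p.2.2, p.2.1 + p.2.2))
    -- `A` is the derivative cocycle `DF`
    (A : Torus3 → (V3 ≃L[ℝ] V3))
    (hA : ∀ p : Torus3, ∀ v : V3,
      A p v = (deriv g (liftc p.1) * v.1, 2 * v.2.1 + v.2.2, v.2.1 + v.2.2))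
    -- the subbundles `E^s = E₁ ⊕ E₂` and `E^u = E₃`
    (Es Eu : Submodule ℝ V3)
    (hEs : Es = Submodule.span ℝ
      {(((1:ℝ), (0:ℝ), (0:ℝ)) : V3), (((0:ℝ), (1 - Real.sqrt 5)/2, (1:ℝ)) : V3)})
    (hEu : Eu = Submodule.span ℝ {(((0:ℝ), (1 + Real.sqrt 5)/2, (1:ℝ)) : V3)})
    -- `μ = δ₀ × Leb`
    (μ : Measure Torus3)
    (hμ : μ = (Measure.dirac ((0:UnitAddCircle))).prod
      (volume : Measure (UnitAddCircle × UnitAddCircle))) :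
    -- the splitting is `DF`-invariant (being constant, it is continuous)
    (∀ p : Torus3,
      Submodule.map (((A p : V3 →L[ℝ] V3)) : V3 →ₗ[ℝ] V3) Es = Es ∧
      Submodule.map (((A p : V3 →L[ℝ] V3)) : V3 →ₗ[ℝ] V3) Eu = Eu) ∧
    -- complementarity
    IsCompl Es Eu ∧
    -- `(1, log (3+√5)^{1/2})`-limit domination away from `{1/2} × T²`
    LimitDominated F A (fun _ => Es) (fun _ => Eu)
      {p : Torus3 | p.1 ≠ (((1:ℝ)/2 : ℝ) : UnitAddCircle)} 1
      (Real.log (Real.sqrt (3 + Real.sqrt 5))) ∧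
    -- no limit domination at the points of `{1/2} × T²`
    (∀ p : Torus3, p.1 = (((1:ℝ)/2 : ℝ) : UnitAddCircle) → ∀ lam : ℝ, 0 < lam →
      ¬ LimitDominated F A (fun _ => Es) (fun _ => Eu) {p} 1 lam) ∧
    -- `{0} × T²` is invariant and dominated …
    (⇑F '' {p : Torus3 | p.1 = ((0:UnitAddCircle))} = {p : Torus3 | p.1 = ((0:UnitAddCircle))}) ∧
    (∃ S : ℕ, 0 < S ∧ ∃ lam : ℝ, 0 < lam ∧
      ∀ p : Torus3, p.1 = ((0:UnitAddCircle)) →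
        Real.log (opNormOn ((cocN F A S p : V3 →L[ℝ] V3)) Es
          / minNormOn ((cocN F A S p : V3 →L[ℝ] V3)) Eu) ≤ -(2*lam)) ∧
    -- … and it is the maximal such `F`-invariant set
    (∀ Δ : Set Torus3, ⇑F '' Δ = Δ →
      (∃ S : ℕ, 0 < S ∧ ∃ lam : ℝ, 0 < lam ∧
        ∀ p ∈ Δ, Real.log (opNormOn ((cocN F A S p : V3 →L[ℝ] V3)) Es
          / minNormOn ((cocN F A S p : V3 →L[ℝ] V3)) Eu) ≤ -(2*lam)) →
      Δ ⊆ {p : Torus3 | p.1 = ((0:UnitAddCircle))}) ∧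
    -- `μ` is an ergodic invariant probability measure of `F` …
    IsProbabilityMeasure μ ∧ Ergodic ⇑F μ ∧
    -- … which is hyperbolic, with the three nonzero Lyapunov exponents
    (∀ᵐ p ∂μ,
      Filter.Tendsto (fun l : ℕ =>
          Real.log ‖(cocN F A l p) (((1:ℝ), (0:ℝ), (0:ℝ)) : V3)‖ / (l : ℝ))
        Filter.atTop (nhds (-Real.log 2)) ∧
      Filter.Tendsto (fun l : ℕ =>
          Real.log ‖(cocN F A l p) (((0:ℝ), (1 - Real.sqrt 5)/2, (1:ℝ)) : V3)‖ / (l : ℝ))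
        Filter.atTop (nhds (-Real.log ((3 + Real.sqrt 5)/2))) ∧
      Filter.Tendsto (fun l : ℕ =>
          Real.log ‖(cocN F A l p) (((0:ℝ), (1 + Real.sqrt 5)/2, (1:ℝ)) : V3)‖ / (l : ℝ))
        Filter.atTop (nhds (Real.log ((3 + Real.sqrt 5)/2)))) := by
  have hdiff : ∀ x ∈ Set.Icc (0 : ℝ) 1, DifferentiableAt ℝ g x := fun x hx =>
    differentiableAt_of_deriv_ne_zero (hg'pos x hx).ne'
  have hg : IsRepellingAtHalf g :=
    ⟨hg_mono, hg_diff.continuousOn, hg0, hg1, hghalf, hlt, hgt⟩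
  have hcont : ContinuousOn (deriv g) (Set.Icc 0 1) := by
    have huniq : UniqueDiffOn ℝ (Set.Icc (0 : ℝ) 1) := uniqueDiffOn_Icc one_pos
    exact (hg_diff.continuousOn_derivWithin huniq le_rfl).congr fun x hx =>
      ((hdiff x hx).derivWithin (huniq x hx)).symm
  rw [← goldenRatio_add_one] at hg'half
  have hF1 (p : Torus3) : (F p).1 = gbar g p.1 := by rw [hF]
  have hEs' : Es = stableSpace := hEs
  have hEu' : Eu = unstableSpace := hEu
  have hpos_log : 0 < Real.log √(3 + √5) := by
    refine Real.log_pos ((Real.lt_sqrt zero_le_one).2 ?_)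
    linarith [Real.sqrt_nonneg 5]
  subst hEs' hEu' hμ
  refine ⟨fun p => ⟨stableSpace_map (hg'pos _ (Set.Ico_subset_Icc_self (liftc_mem _))) (hA p),
      unstableSpace_map (hA p)⟩, isCompl_stableSpace_unstableSpace,
    limitDominated_compl_half hg hcont hg'pos hg'0 hg'1 hF1 hA,
    fun p hp lam hlam => not_limitDominated_half hg hg'pos hg'half hF1 hA hp hlam,
    image_zero_fiber hg hF1,
    ⟨1, one_pos, _, hpos_log, fun p hp => (log_zero_fiber hg hg'pos hg'0 hF1 hA hp).le⟩,
    fun Δ hΔ ⟨S, _, lam, hlam, hdom⟩ =>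
      subset_zero_fiber_of_dominated hg hcont hg'pos hg'half hF1 hA hΔ hlam hdom,
    isProbabilityMeasure_dirac_prod_volume, ergodic_dirac_prod_volume hg hF, ?_⟩
  have hfiber : ∀ᵐ p ∂(Measure.dirac (0 : UnitAddCircle)).prod
      (volume : Measure (UnitAddCircle × UnitAddCircle)), p.1 = 0 :=
    Measure.quasiMeasurePreserving_fst.ae ((ae_dirac_iff (measurableSet_singleton _)).2 rfl)
  filter_upwards [hfiber] with p hp
  have hfst (l : ℕ) : ‖cocN F A l p (1, 0, 0)‖ = (1 / 2) ^ l * 1 := by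
    have h := cocN_apply hg hF1 hA Real.goldenRatio_sq l p 1 0
    simp only [mul_zero, mul_one] at h
    rw [h, hp, liftc_zero, orbitDeriv_of_fixed hg0, hg'0]
    simp [Prod.norm_mk]
  have heig {c : ℝ} (hc : c ^ 2 = c + 1) (hc1 : 0 < c + 1) (l : ℕ) :
      ‖cocN F A l p (0, c, 1)‖ = (c + 1) ^ l * ‖((0, c, 1) : V3)‖ := by
    have h := cocN_apply hg hF1 hA hc l p 0 1
    simp only [mul_zero, mul_one] at h
    rw [h, show ((0, (c + 1) ^ l * c, (c + 1) ^ l) : V3) = (c + 1) ^ l • (0, c, 1) by simp,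
      norm_smul, Real.norm_of_nonneg (pow_pos hc1 l).le]
  have hnorm (c : ℝ) : 0 < ‖((0, c, 1) : V3)‖ := norm_pos_iff.2 (by simp)
  have hφ : 0 < Real.goldenRatio + 1 := add_pos Real.goldenRatio_pos one_pos
  refine ⟨?_, ?_, ?_⟩
  · simp only [hfst]
    simpa using tendsto_log_pow_mul_div (r := 1 / 2) (by norm_num) one_pos
  · rw [← goldenRatio_add_one, ← log_goldenConj_add_one]
    exact (tendsto_log_pow_mul_div goldenConj_add_one_pos (hnorm _)).congr fun l => by
      rw [← heig Real.goldenConj_sq goldenConj_add_one_pos]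
  · rw [← goldenRatio_add_one]
    exact (tendsto_log_pow_mul_div hφ (hnorm _)).congr fun l => by
      rw [← heig Real.goldenRatio_sq hφ]

end
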